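/- Let a < b and let f, g : [a;b] → ℝ be regulated functions with no common points of discontinuity. Let (η_k)_{k≥0} and (θ_k)_{k≥0} be nonincreasing sequences of non-negative reals with η_k → 0 and θ_k → 0 as k → ∞. Set θ_{-1} := sup_{a≤t≤b} |g(b) − g(t)| and S̃ := Σ_{k=0}^{∞} 2^k · θ_{k−1} · TV^{η_k}(f,[a;b]) + Σ_{k=0}^{∞} 2^k · η_k · TV^{θ_k}(g,[a;b]). If S̃ < +∞, then the Riemann–Stieltjes integral ∫_a^b f dg exists and |∫_a^b f dg − f(a)·(g(b) − g(a))| ≤ S̃. -/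

import Mathlib

open Filter Set

/-- Truncated variation of `f` on `[a;b]` with truncation parameter `δ`. -/
noncomputable def truncVar (f : ℝ → ℝ) (δ a b : ℝ) : ENNReal :=
  ⨆ (n : ℕ) (t : Fin (n + 1) → ℝ) (_ : StrictMono t)
    (_ : ∀ i, t i ∈ Set.Icc a b),
    ∑ i : Fin n, ENNReal.ofReal (|f (t i.succ) - f (t i.castSucc)| - δ)

/-- p-variation of `f` on `[a;b]`. -/
noncomputable def pVar (f : ℝ → ℝ) (p a b : ℝ) : ENNReal :=
  ⨆ (n : ℕ) (t : Fin (n + 1) → ℝ) (_ : StrictMono t)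
    (_ : ∀ i, t i ∈ Set.Icc a b),
    ∑ i : Fin n, ENNReal.ofReal (|f (t i.succ) - f (t i.castSucc)| ^ p)

/-- The p-variation norm `(V^p(f,[a;b]))^{1/p}`. -/
noncomputable def pVarNorm (f : ℝ → ℝ) (p a b : ℝ) : ℝ :=
  (pVar f p a b).toReal ^ (1 / p)

/-- Oscillation norm `sup_{a ≤ s < t ≤ b} |f t - f s|`. -/
noncomputable def oscNorm (f : ℝ → ℝ) (a b : ℝ) : ℝ :=
  sSup {x | ∃ s ∈ Set.Icc a b, ∃ t ∈ Set.Icc a b, s < t ∧ x = |f t - f s|}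

/-- Sup norm `sup_{a ≤ t ≤ b} |f t|`. -/
noncomputable def supNorm (f : ℝ → ℝ) (a b : ℝ) : ℝ :=
  sSup {x | ∃ t ∈ Set.Icc a b, x = |f t|}

/-- `I` is the Riemann–Stieltjes integral `∫_a^b f dg`. -/
def RSIntegral (f g : ℝ → ℝ) (a b : ℝ) (I : ℝ) : Prop :=
  ∀ ε > (0 : ℝ), ∃ δ > (0 : ℝ), ∀ (n : ℕ) (t : Fin (n + 1) → ℝ) (ξ : Fin n → ℝ),
    StrictMono t → t 0 = a → t (Fin.last n) = b →
    (∀ i : Fin n, t i.castSucc ≤ ξ i ∧ ξ i ≤ t i.succ) →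
    (∀ i : Fin n, t i.succ - t i.castSucc < δ) →
    |∑ i : Fin n, f (ξ i) * (g (t i.succ) - g (t i.castSucc)) - I| < ε

/-- `f` is regulated on `[a;b]`: all the relevant one-sided limits exist and are finite. -/
def Regulated (f : ℝ → ℝ) (a b : ℝ) : Prop :=
  (∃ L : ℝ, Tendsto f (nhdsWithin a (Set.Ioi a)) (nhds L)) ∧
  (∃ L : ℝ, Tendsto f (nhdsWithin b (Set.Iio b)) (nhds L)) ∧
  ∀ x ∈ Set.Ioo a b,
    (∃ L : ℝ, Tendsto f (nhdsWithin x (Set.Iio x)) (nhds L)) ∧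
    (∃ L : ℝ, Tendsto f (nhdsWithin x (Set.Ioi x)) (nhds L))

/-- `f` and `g` have no common points of discontinuity on `[a;b]`. -/
def NoCommonDiscont (f g : ℝ → ℝ) (a b : ℝ) : Prop :=
  ∀ x ∈ Set.Icc a b,
    ContinuousWithinAt f (Set.Icc a b) x ∨ ContinuousWithinAt g (Set.Icc a b) x

/-!
Write `TV^δ` for the truncated variation and `S̃(c, d)` for the series on `[c;d]`.

* If `TV^δ(f)` is finite, then `|f y - f x| ≤ T y - T x + δ` for the nondecreasing function
  `T x = -TV^δ(f,[x;b])`. A lower envelope of `f` with respect to `T` stays within `δ` of `f` and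
  has total variation at most `TV^δ(f)`.
* Replacing `f` and `g` in turns by such approximations and telescoping bounds every sum
  `∑ (f(r_i) - f(r_0)) (g(r_{i+1}) - g(r_i))` in `[c;d]` by `S̃(c, d)`.
* Hence on any finite set of points the left sums give an approximate indefinite integral, and a
  compactness argument, as in the sewing lemma, gives one on the whole interval: a function `F`
  with `|F d - F c - f c (g d - g c)| ≤ S̃(c, d)`.
* `f` and `g` have no common discontinuity, so on every cell of a fine partition one of them
  oscillates so little that the first `K` terms of the series are not needed. The errors are
  superadditive in the cell, so the Riemann sums differ from `F b - F a` by at most twice a tail of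
  the series.
* The last step needs positive levels. If some level vanishes, finiteness of `S̃` forces `f` or `g`
  to have bounded variation, and then positive levels can be chosen afresh.
-/

section TruncVar

variable {f : ℝ → ℝ} {δ a b c : ℝ}

lemma sum_fin_succ_sub_castSucc {M : Type*} [AddCommGroup M] {n : ℕ} (u : Fin (n + 1) → M) :
    ∑ i : Fin n, (u i.succ - u i.castSucc) = u (Fin.last n) - u 0 := by
  rw [Finset.sum_sub_distrib, sub_eq_sub_iff_add_eq_add, add_comm, ← Fin.sum_univ_succ,
    Fin.sum_univ_castSucc, add_comm]

lemma sum_le_truncVar {n : ℕ} {t : Fin (n + 1) → ℝ} (ht : StrictMono t)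
    (hmem : ∀ i, t i ∈ Icc a b) :
    ∑ i : Fin n, ENNReal.ofReal (|f (t i.succ) - f (t i.castSucc)| - δ) ≤ truncVar f δ a b :=
  le_iSup_of_le n <| le_iSup₂_of_le t ht <| le_iSup_of_le hmem le_rfl

lemma truncVar_anti (f : ℝ → ℝ) (a b : ℝ) : Antitone fun δ ↦ truncVar f δ a b := by
  intro δ δ' hδ
  dsimp only [truncVar]
  gcongr

lemma truncVar_add_le {B C : ENNReal} (hab : a ≤ b)
    (h : ∀ (n : ℕ) (t : Fin (n + 1) → ℝ), StrictMono t → (∀ i, t i ∈ Icc a b) →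
      ∑ i : Fin n, ENNReal.ofReal (|f (t i.succ) - f (t i.castSucc)| - δ) + C ≤ B) :
    truncVar f δ a b + C ≤ B := by
  have hCB : C ≤ B := by
    simpa using h 0 ![a] (by simp [StrictMono]) (by simp [hab])
  rcases eq_or_ne C ⊤ with rfl | hC
  · simp [top_le_iff.1 hCB]
  · refine add_le_of_le_tsub_right_of_le hCB ?_
    exact iSup_le fun n ↦ iSup₂_le fun t ht ↦ iSup_le fun hmem ↦
      ENNReal.le_sub_of_add_le_right hC (h n t ht hmem)

lemma ofReal_add_sum_le_truncVar (hδ : 0 ≤ δ) {n : ℕ} {t : Fin (n + 1) → ℝ} (ht : StrictMono t)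
    (ha : a ≤ t 0) (hb : t (Fin.last n) ≤ b) :
    ENNReal.ofReal (|f (t 0) - f a| - δ) +
      ∑ i : Fin n, ENNReal.ofReal (|f (t i.succ) - f (t i.castSucc)| - δ) ≤
    truncVar f δ a b := by
  have hmem i : t i ∈ Icc a b :=
    ⟨ha.trans (ht.monotone (Fin.zero_le i)), (ht.monotone (Fin.le_last i)).trans hb⟩
  rcases ha.eq_or_lt with h0 | h0
  · simpa [← h0, ENNReal.ofReal_of_nonpos (neg_nonpos.2 hδ)] using sum_le_truncVar ht hmem
  · have hcons := sum_le_truncVar (f := f) (δ := δ) (a := a) (b := b) (ht.vecCons h0)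
      (Fin.cases (left_mem_Icc.2 ((hmem 0).1.trans (hmem 0).2)) hmem)
    rw [Fin.sum_univ_succ] at hcons
    exact hcons

lemma ofReal_add_truncVar_le (hδ : 0 ≤ δ) (hac : a ≤ c) (hcb : c ≤ b) :
    ENNReal.ofReal (|f c - f a| - δ) + truncVar f δ c b ≤ truncVar f δ a b := by
  rw [add_comm]
  refine truncVar_add_le hcb fun n t ht hmem ↦ ?_
  rw [add_comm]
  rcases (hmem 0).1.eq_or_lt with h0 | h0
  · rw [h0]
    exact ofReal_add_sum_le_truncVar hδ ht (hac.trans (hmem 0).1) (hmem _).2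
  · have hcons := ofReal_add_sum_le_truncVar (f := f) hδ (ht.vecCons h0) hac (hmem _).2
    rw [Fin.sum_univ_succ] at hcons
    exact (add_le_add le_rfl le_add_self).trans hcons

lemma truncVar_anti_left (hδ : 0 ≤ δ) (hac : a ≤ c) (hcb : c ≤ b) :
    truncVar f δ c b ≤ truncVar f δ a b :=
  le_add_self.trans (ofReal_add_truncVar_le hδ hac hcb)

lemma sum_add_truncVar_le (hδ : 0 ≤ δ) {n : ℕ} {t : Fin (n + 1) → ℝ} (ht : Monotone t)
    (hb : t (Fin.last n) ≤ b) :
    ∑ i : Fin n, ENNReal.ofReal (|f (t i.succ) - f (t i.castSucc)| - δ) +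
      truncVar f δ (t (Fin.last n)) b ≤ truncVar f δ (t 0) b := by
  induction n with
  | zero => simp
  | succ n ih =>
    have htail := ih (t := fun i ↦ t i.succ) (ht.comp Fin.strictMono_succ.monotone) hb
    have hhead := ofReal_add_truncVar_le (f := f) hδ (ht (Fin.zero_le (Fin.succ 0)))
      ((ht (Fin.le_last _)).trans hb)
    rw [Fin.sum_univ_succ, add_assoc]
    exact (add_le_add le_rfl htail).trans hhead

lemma truncVar_add_truncVar_le (hδ : 0 ≤ δ) (hac : a ≤ c) (hcb : c ≤ b) :
    truncVar f δ a c + truncVar f δ c b ≤ truncVar f δ a b :=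
  truncVar_add_le hac fun n t ht hmem ↦
    calc
      _ ≤ ∑ i : Fin n, ENNReal.ofReal (|f (t i.succ) - f (t i.castSucc)| - δ) +
          truncVar f δ (t (Fin.last n)) b := by
        gcongr
        exact truncVar_anti_left hδ (hmem _).2 hcb
      _ ≤ truncVar f δ (t 0) b := sum_add_truncVar_le hδ ht.monotone ((hmem _).2.trans hcb)
      _ ≤ truncVar f δ a b := truncVar_anti_left hδ (hmem 0).1 ((hmem 0).2.trans hcb)

lemma truncVar_le_of_abs_sub_le {T : ℝ → ℝ} (hT : MonotoneOn T (Icc a b))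
    (h : ∀ s ∈ Icc a b, ∀ t ∈ Icc a b, s ≤ t → |f t - f s| ≤ T t - T s + δ) :
    truncVar f δ a b ≤ ENNReal.ofReal (T b - T a) := by
  refine iSup_le fun n ↦ iSup₂_le fun t ht ↦ iSup_le fun hmem ↦ ?_
  have hab : a ≤ b := (hmem 0).1.trans (hmem 0).2
  have hstep (i : Fin n) : t i.castSucc ≤ t i.succ := ht.monotone i.castSucc_le_succ
  calc
    _ ≤ ∑ i : Fin n, ENNReal.ofReal (T (t i.succ) - T (t i.castSucc)) := by
      gcongr ∑ i, ENNReal.ofReal ?_ with i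
      linarith [h _ (hmem i.castSucc) _ (hmem i.succ) (hstep i)]
    _ = ENNReal.ofReal (∑ i : Fin n, (T (t i.succ) - T (t i.castSucc))) :=
      (ENNReal.ofReal_sum_of_nonneg fun i _ ↦
        sub_nonneg.2 (hT (hmem _) (hmem _) (hstep i))).symm
    _ = ENNReal.ofReal (T (t (Fin.last n)) - T (t 0)) := by
      rw [sum_fin_succ_sub_castSucc fun i ↦ T (t i)]
    _ ≤ ENNReal.ofReal (T b - T a) := by
      gcongr
      · exact hT (hmem _) (right_mem_Icc.2 hab) (hmem _).2
      · exact hT (left_mem_Icc.2 hab) (hmem _) (hmem _).1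

end TruncVar

section Decomposition

variable {α : Type*} {f : ℝ → ℝ} {δ a b : ℝ}

lemma exists_monotoneOn_of_truncVar_ne_top (hδ : 0 ≤ δ) (h : truncVar f δ a b ≠ ⊤) :
    ∃ T : ℝ → ℝ, MonotoneOn T (Icc a b) ∧
      (∀ x ∈ Icc a b, ∀ y ∈ Icc a b, x ≤ y → |f y - f x| ≤ T y - T x + δ) ∧
      ENNReal.ofReal (T b - T a) ≤ truncVar f δ a b := by
  set T : ℝ → ℝ := fun x ↦ -(truncVar f δ x b).toReal
  have fin x (hx : x ∈ Icc a b) : truncVar f δ x b ≠ ⊤ :=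
    ne_top_of_le_ne_top h (truncVar_anti_left hδ hx.1 hx.2)
  have step x (hx : x ∈ Icc a b) y (hy : y ∈ Icc a b) (hxy : x ≤ y) :
      max (|f y - f x| - δ) 0 ≤ T y - T x := by
    have := ENNReal.toReal_mono (fin x hx) (ofReal_add_truncVar_le (f := f) hδ hxy hy.2)
    rw [ENNReal.toReal_add ENNReal.ofReal_ne_top (fin y hy), ENNReal.toReal_ofReal'] at this
    linarith
  refine ⟨T, fun x hx y hy hxy ↦ sub_nonneg.1 ((le_max_right _ _).trans (step x hx y hy hxy)),
    fun x hx y hy hxy ↦ by linarith [le_max_left (|f y - f x| - δ) 0, step x hx y hy hxy], ?_⟩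
  calc
    ENNReal.ofReal (T b - T a) ≤ ENNReal.ofReal (truncVar f δ a b).toReal := by
      gcongr
      linarith [ENNReal.toReal_nonneg (a := truncVar f δ b b)]
    _ = truncVar f δ a b := ENNReal.ofReal_toReal h

lemma exists_le_and_abs_sub_le {S : Set α} {f T : α → ℝ}
    (h : ∀ x ∈ S, ∀ y ∈ S, |f x - f y| ≤ |T x - T y| + δ) :
    ∃ u : α → ℝ, (∀ x ∈ S, u x ≤ f x ∧ f x ≤ u x + δ) ∧
      ∀ x ∈ S, ∀ y ∈ S, |u x - u y| ≤ |T x - T y| := by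
  -- The lower envelope of the functions `f z + |T · - T z|`.
  set u : α → ℝ := fun x ↦ ⨅ z : S, (f z + |T x - T z|)
  have lower x (hx : x ∈ S) (z : S) : f x - δ ≤ f z + |T x - T z| := by
    linarith [h x hx z z.2, le_abs_self (f x - f z)]
  have u_le x (hx : x ∈ S) (z : S) : u x ≤ f z + |T x - T z| :=
    ciInf_le ⟨_, forall_mem_range.2 (lower x hx)⟩ z
  have u_sub_le x (hx : x ∈ S) y : u x - u y ≤ |T x - T y| := by
    have : Nonempty S := ⟨⟨x, hx⟩⟩
    rw [sub_le_comm]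
    exact le_ciInf fun z ↦ by linarith [u_le x hx z, abs_sub_le (T x) (T y) (T z)]
  refine ⟨u, fun x hx ↦ ⟨by simpa using u_le x hx ⟨x, hx⟩, ?_⟩, fun x hx y hy ↦ ?_⟩
  · have : Nonempty S := ⟨⟨x, hx⟩⟩
    linarith [le_ciInf (lower x hx)]
  · exact abs_sub_le_iff.2 ⟨u_sub_le x hx y, abs_sub_comm (T x) (T y) ▸ u_sub_le y hy x⟩

lemma eVariationOn_le_of_abs_sub_le [LinearOrder α] {S : Set α} {u T : α → ℝ}
    (h : ∀ x ∈ S, ∀ y ∈ S, |u x - u y| ≤ |T x - T y|) : eVariationOn u S ≤ eVariationOn T S := by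
  refine iSup_mono fun p ↦ Finset.sum_le_sum fun i _ ↦ ?_
  simp only [edist_dist, Real.dist_eq]
  exact ENNReal.ofReal_le_ofReal (h _ (p.2.2.2 _) _ (p.2.2.2 _))

lemma exists_abs_sub_le_and_eVariationOn_le (hδ : 0 ≤ δ) (hab : a ≤ b) (f : ℝ → ℝ) :
    ∃ u : ℝ → ℝ, (∀ x ∈ Icc a b, ∀ y ∈ Icc a b, |(f - u) x - (f - u) y| ≤ δ) ∧
      eVariationOn u (Icc a b) ≤ truncVar f δ a b := by
  rcases eq_or_ne (truncVar f δ a b) ⊤ with htop | htop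
  · exact ⟨f, by simpa using fun _ _ _ _ _ _ ↦ hδ, htop ▸ le_top⟩
  obtain ⟨T, hT, hfT, hTb⟩ := exists_monotoneOn_of_truncVar_ne_top hδ htop
  have close x (hx : x ∈ Icc a b) y (hy : y ∈ Icc a b) : |f x - f y| ≤ |T x - T y| + δ := by
    rcases le_total x y with hxy | hxy
    · rw [abs_sub_comm (f x), abs_sub_comm (T x)]
      linarith [hfT x hx y hy hxy, le_abs_self (T y - T x)]
    · linarith [hfT y hy x hx hxy, le_abs_self (T x - T y)]
  obtain ⟨u, hu, huT⟩ := exists_le_and_abs_sub_le close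
  refine ⟨u, fun x hx y hy ↦ abs_sub_le_iff.2 ?_, ?_⟩
  · simp only [Pi.sub_apply]
    constructor <;> linarith [(hu x hx).1, (hu x hx).2, (hu y hy).1, (hu y hy).2]
  calc
    eVariationOn u (Icc a b) ≤ eVariationOn T (Icc a b ∩ Icc a b) := by
      rw [inter_self]
      exact eVariationOn_le_of_abs_sub_le huT
    _ = ENNReal.ofReal (T b - T a) :=
      hT.eVariationOn_eq (left_mem_Icc.2 hab) (right_mem_Icc.2 hab)
    _ ≤ truncVar f δ a b := hTb

end Decomposition

section AnchoredSum

/-- The left Riemann–Stieltjes sum of the integrand `x - x 0` against `y`; subtracting `x 0` makes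
it control `∫ f dg - f(a) (g(b) - g(a))`. Sequences indexed by `ℕ` are used, as for `eVariationOn`,
and only the first `n + 1` values matter. -/
def anchoredSum (n : ℕ) (x y : ℕ → ℝ) : ℝ :=
  ∑ i ∈ Finset.range n, (x i - x 0) * (y (i + 1) - y i)

variable {n : ℕ} {x y : ℕ → ℝ}

lemma anchoredSum_sub_left (x x' y : ℕ → ℝ) :
    anchoredSum n (x - x') y = anchoredSum n x y - anchoredSum n x' y := by
  simp only [anchoredSum, ← Finset.sum_sub_distrib, Pi.sub_apply]
  exact Finset.sum_congr rfl fun i _ ↦ by ring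

lemma anchoredSum_sub_right (x y y' : ℕ → ℝ) :
    anchoredSum n x (y - y') = anchoredSum n x y - anchoredSum n x y' := by
  simp only [anchoredSum, ← Finset.sum_sub_distrib, Pi.sub_apply]
  exact Finset.sum_congr rfl fun i _ ↦ by ring

lemma anchoredSum_eq_sum_mul_sub (n : ℕ) (x y : ℕ → ℝ) :
    anchoredSum n x y = ∑ i ∈ Finset.range n, (x (i + 1) - x i) * (y n - y (i + 1)) := by
  induction n with
  | zero => simp [anchoredSum]
  | succ n ih =>
    have hshift : ∑ i ∈ Finset.range n, (x (i + 1) - x i) * (y (n + 1) - y (i + 1)) =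
        ∑ i ∈ Finset.range n, (x (i + 1) - x i) * (y n - y (i + 1)) +
          (x n - x 0) * (y (n + 1) - y n) := by
      rw [← Finset.sum_range_sub x n, Finset.sum_mul, ← Finset.sum_add_distrib]
      exact Finset.sum_congr rfl fun i _ ↦ by ring
    rw [Finset.sum_range_succ, hshift, ← ih, anchoredSum, anchoredSum, Finset.sum_range_succ]
    ring

lemma ofReal_abs_sum_mul_le {z w : ℕ → ℝ} {C : ℝ} (hz : ∀ i < n, |z i| ≤ C) :
    ENNReal.ofReal |∑ i ∈ Finset.range n, z i * w i| ≤
      ENNReal.ofReal C * ∑ i ∈ Finset.range n, ENNReal.ofReal |w i| := by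
  rw [← ENNReal.ofReal_sum_of_nonneg fun _ _ ↦ abs_nonneg _, ← ENNReal.ofReal_mul'
    (Finset.sum_nonneg fun _ _ ↦ abs_nonneg _), Finset.mul_sum]
  gcongr
  refine (Finset.abs_sum_le_sum_abs _ _).trans (Finset.sum_le_sum fun i hi ↦ ?_)
  rw [abs_mul]
  gcongr
  exact hz i (Finset.mem_range.1 hi)

variable {S : Set ℝ} {C : ℝ}

lemma sum_ofReal_abs_sub_le_eVariationOn {q : ℝ → ℝ} {t : ℕ → ℝ} (ht : Monotone t)
    (hS : ∀ i ≤ n, t i ∈ S) :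
    ∑ i ∈ Finset.range n, ENNReal.ofReal |q (t (i + 1)) - q (t i)| ≤ eVariationOn q S := by
  simpa only [edist_dist, Real.dist_eq] using
    eVariationOn.sum_le_of_monotoneOn_Iic (f := q) (ht.monotoneOn _) hS

lemma ofReal_abs_anchoredSum_le_of_left {q : ℝ → ℝ} {t : ℕ → ℝ} (ht : Monotone t)
    (hS : ∀ i ≤ n, t i ∈ S) (hx : ∀ i ≤ n, |x i - x 0| ≤ C) :
    ENNReal.ofReal |anchoredSum n x (q ∘ t)| ≤ ENNReal.ofReal C * eVariationOn q S :=
  (ofReal_abs_sum_mul_le fun i hi ↦ hx i hi.le).trans <|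
    by gcongr; exact sum_ofReal_abs_sub_le_eVariationOn ht hS

lemma ofReal_abs_anchoredSum_le_of_right {v : ℝ → ℝ} {s : ℕ → ℝ} (hs : Monotone s)
    (hS : ∀ i ≤ n, s i ∈ S) (hy : ∀ i ≤ n, |y n - y i| ≤ C) :
    ENNReal.ofReal |anchoredSum n (v ∘ s) y| ≤ ENNReal.ofReal C * eVariationOn v S := by
  rw [anchoredSum_eq_sum_mul_sub]
  simp only [mul_comm (_ - _) (y n - _)]
  exact (ofReal_abs_sum_mul_le fun i hi ↦ hy _ hi).trans <|
    by gcongr; exact sum_ofReal_abs_sub_le_eVariationOn hs hS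

lemma tendsto_anchoredSum_zero {v q : ℕ → ℕ → ℝ}
    (hv : ∀ i ≤ n, Tendsto (fun k ↦ v k i - v k 0) atTop (nhds 0))
    (hq : ∀ i ≤ n, Tendsto (fun k ↦ q k n - q k i) atTop (nhds 0)) :
    Tendsto (fun k ↦ anchoredSum n (v k) (q k)) atTop (nhds 0) := by
  have hterm i (hi : i ∈ Finset.range n) :
      Tendsto (fun k ↦ (v k i - v k 0) * (q k (i + 1) - q k i)) atTop (nhds 0) := by
    have hin := Finset.mem_range.1 hi
    simpa using (hv i hin.le).mul ((hq i hin.le).sub (hq (i + 1) hin))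
  simpa only [anchoredSum, Finset.sum_const_zero] using tendsto_finsetSum _ hterm

lemma ofReal_abs_anchoredSum_le_tsum {v q : ℕ → ℕ → ℝ}
    (hlim : Tendsto (fun k ↦ anchoredSum n (v k) (q k)) atTop (nhds 0)) :
    ENNReal.ofReal |anchoredSum n (v 0) (q 0)| ≤
      ∑' k, (ENNReal.ofReal |anchoredSum n (v k - v (k + 1)) (q k)| +
        ENNReal.ofReal |anchoredSum n (v (k + 1)) (q k - q (k + 1))|) := by
  set D : ℕ → ℝ := fun k ↦ anchoredSum n (v k) (q k)
  set A : ℕ → ENNReal := fun k ↦ ENNReal.ofReal |anchoredSum n (v k - v (k + 1)) (q k)| +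
    ENNReal.ofReal |anchoredSum n (v (k + 1)) (q k - q (k + 1))|
  have hstep k : edist (D k) (D (k + 1)) ≤ A k := by
    have hsplit : D k - D (k + 1) = anchoredSum n (v k - v (k + 1)) (q k) +
        anchoredSum n (v (k + 1)) (q k - q (k + 1)) := by
      rw [anchoredSum_sub_left, anchoredSum_sub_right]
      ring
    rw [edist_dist, Real.dist_eq, hsplit]
    exact (ENNReal.ofReal_le_ofReal (abs_add_le _ _)).trans ENNReal.ofReal_add_le
  simpa [edist_dist, Real.dist_eq] using edist_le_tsum_of_edist_le_of_tendsto₀ A hstep hlim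

end AnchoredSum

section TruncVarSeries

/-- Truncation levels for a pair of integrand (`η`) and integrator (`θ`): two null sequences.
Since `θ k` is the `θ_{k-1}` of the paper, monotonicity of `θ` is only asked for from index `1`
on, and `θ 0` is a bound for the oscillation of the integrator. -/
structure IsNullLevels (η θ : ℕ → ℝ) : Prop where
  antitone_left : Antitone η
  antitone_right : Antitone fun k ↦ θ (k + 1)
  tendsto_left : Tendsto η atTop (nhds 0)
  tendsto_right : Tendsto θ atTop (nhds 0)

/-- The series `S̃` on `[c;d]`, with the index of `θ` shifted by one compared with the paper, as in
`IsNullLevels`. -/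
noncomputable def truncVarSeries (f g : ℝ → ℝ) (η θ : ℕ → ℝ) (c d : ℝ) : ENNReal :=
  ∑' k, (ENNReal.ofReal (2 ^ k * θ k) * truncVar f (η k) c d +
    ENNReal.ofReal (2 ^ k * η k) * truncVar g (θ (k + 1)) c d)

/-- Either `f` oscillates by at most `ε₁` on `[c;d]`, or `g` stays within `ε₂` of `g d` there.
With `ε₁ = η 0` and `ε₂ = θ 0` this is what lets `truncVarSeries` start from its zeroth term. -/
def IsSmallCell (f g : ℝ → ℝ) (ε₁ ε₂ c d : ℝ) : Prop :=
  (∀ x ∈ Icc c d, ∀ y ∈ Icc c d, |f x - f y| ≤ ε₁) ∨ ∀ x ∈ Icc c d, |g d - g x| ≤ ε₂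

variable {f g : ℝ → ℝ} {η θ : ℕ → ℝ} {a b c d : ℝ}

namespace IsNullLevels

lemma nonneg_left (h : IsNullLevels η θ) (k : ℕ) : 0 ≤ η k :=
  h.antitone_left.le_of_tendsto h.tendsto_left k

lemma nonneg_right (h : IsNullLevels η θ) (k : ℕ) : 0 ≤ θ (k + 1) :=
  h.antitone_right.le_of_tendsto ((tendsto_add_atTop_iff_nat 1).2 h.tendsto_right) k

lemma comp_add (h : IsNullLevels η θ) (K : ℕ) :
    IsNullLevels (fun k ↦ η (k + K)) fun k ↦ θ (k + K) where
  antitone_left _ _ hkl := h.antitone_left (by gcongr)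
  antitone_right k l hkl := by
    simpa only [add_right_comm _ 1 K] using h.antitone_right (add_le_add_left hkl K)
  tendsto_left := (tendsto_add_atTop_iff_nat K).2 h.tendsto_left
  tendsto_right := (tendsto_add_atTop_iff_nat K).2 h.tendsto_right

end IsNullLevels

lemma ofReal_two_pow_mul (k : ℕ) (x : ℝ) :
    ENNReal.ofReal (2 ^ k * x) = ENNReal.ofReal x * 2 ^ k := by
  rw [mul_comm, ENNReal.ofReal_mul' (by positivity), ENNReal.ofReal_pow zero_le_two,
    ENNReal.ofReal_ofNat]

lemma truncVarSeries_add_le (h : IsNullLevels η θ) (hac : a ≤ c) (hcb : c ≤ b) :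
    truncVarSeries f g η θ a c + truncVarSeries f g η θ c b ≤ truncVarSeries f g η θ a b := by
  simp only [truncVarSeries, ← ENNReal.tsum_add]
  refine ENNReal.tsum_le_tsum fun k ↦ ?_
  rw [add_add_add_comm, ← mul_add, ← mul_add]
  gcongr
  · exact truncVar_add_truncVar_le (h.nonneg_left k) hac hcb
  · exact truncVar_add_truncVar_le (h.nonneg_right k) hac hcb

lemma truncVarSeries_mono (h : IsNullLevels η θ) (hac : a ≤ c) (hcd : c ≤ d) (hdb : d ≤ b) :
    truncVarSeries f g η θ c d ≤ truncVarSeries f g η θ a b :=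
  calc
    _ ≤ truncVarSeries f g η θ c b := le_self_add.trans (truncVarSeries_add_le h hcd hdb)
    _ ≤ _ := le_add_self.trans (truncVarSeries_add_le h hac (hcd.trans hdb))

lemma eVariationOn_sub_le {α E : Type*} [LinearOrder α] [SeminormedAddCommGroup E] (u v : α → E)
    (S : Set α) : eVariationOn (u - v) S ≤ eVariationOn u S + eVariationOn v S := by
  refine iSup_le fun p ↦ ?_
  calc
    _ ≤ ∑ i ∈ Finset.range p.1, (edist (u (p.2.1 (i + 1))) (u (p.2.1 i)) +
        edist (v (p.2.1 (i + 1))) (v (p.2.1 i))) :=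
      Finset.sum_le_sum fun i _ ↦ by
        simpa only [Pi.sub_apply, sub_eq_add_neg, edist_neg_neg] using
          edist_add_add_le (u (p.2.1 (i + 1))) (-v (p.2.1 (i + 1))) (u (p.2.1 i)) (-v (p.2.1 i))
    _ ≤ eVariationOn u S + eVariationOn v S := by
      rw [Finset.sum_add_distrib]
      exact add_le_add (eVariationOn.sum_le p.2.2.1 p.2.2.2) (eVariationOn.sum_le p.2.2.1 p.2.2.2)

/-- `v` approximates `f` by remainders: `v 0 = f`, the oscillation of `v (k + 1)` on `[c;d]` is at
most `η k`, and the increments `v k - v (k + 1)` are as regular as the truncated variations of `f`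
allow. -/
structure IsTruncApprox (f : ℝ → ℝ) (η : ℕ → ℝ) (c d : ℝ) (v : ℕ → ℝ → ℝ) : Prop where
  zero : v 0 = f
  abs_sub_le : ∀ k, ∀ x ∈ Icc c d, ∀ y ∈ Icc c d, |v (k + 1) x - v (k + 1) y| ≤ η k
  eVariationOn_le : ∀ k,
    eVariationOn (v k - v (k + 1)) (Icc c d) ≤ 2 ^ k * truncVar f (η k) c d

lemma exists_isTruncApprox_of_first (hη : Antitone η) (hη0 : ∀ k, 0 ≤ η k) (hcd : c ≤ d)
    {u : ℝ → ℝ} (hosc : ∀ x ∈ Icc c d, ∀ y ∈ Icc c d, |(f - u) x - (f - u) y| ≤ η 0)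
    (hu : eVariationOn u (Icc c d) ≤ truncVar f (η 0) c d) :
    ∃ v, IsTruncApprox f η c d v ∧ v 1 = f - u := by
  obtain ⟨z, hz0, hzosc, hzV⟩ : ∃ z : ℕ → ℝ → ℝ, z 0 = u ∧
      (∀ k, ∀ x ∈ Icc c d, ∀ y ∈ Icc c d, |(f - z k) x - (f - z k) y| ≤ η k) ∧
      ∀ k, eVariationOn (z k) (Icc c d) ≤ truncVar f (η k) c d := by
    choose w hw hwV using fun k ↦ exists_abs_sub_le_and_eVariationOn_le (hη0 (k + 1)) hcd f
    exact ⟨fun k ↦ k.casesOn u w, rfl, Nat.rec hosc fun k _ ↦ hw k, Nat.rec hu fun k _ ↦ hwV k⟩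
  refine ⟨fun k ↦ k.casesOn f fun k ↦ f - z k, ⟨rfl, hzosc, ?_⟩, hz0 ▸ rfl⟩
  rintro (_ | k)
  · simpa [hz0] using hu
  change eVariationOn (f - z k - (f - z (k + 1))) (Icc c d) ≤ _
  rw [sub_sub_sub_cancel_left, pow_succ, mul_assoc, two_mul]
  have hanti : truncVar f (η k) c d ≤ truncVar f (η (k + 1)) c d :=
    truncVar_anti f c d (hη k.le_succ)
  calc
    eVariationOn (z (k + 1) - z k) (Icc c d) ≤
        truncVar f (η (k + 1)) c d + truncVar f (η (k + 1)) c d :=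
      (eVariationOn_sub_le _ _ _).trans (add_le_add (hzV _) ((hzV _).trans hanti))
    _ ≤ 2 ^ k * (truncVar f (η (k + 1)) c d + truncVar f (η (k + 1)) c d) :=
      le_mul_of_one_le_left' (one_le_pow₀ one_le_two)

lemma exists_isTruncApprox (hη : Antitone η) (hη0 : ∀ k, 0 ≤ η k) (hcd : c ≤ d) (f : ℝ → ℝ) :
    ∃ v, IsTruncApprox f η c d v := by
  obtain ⟨u, hu, huV⟩ := exists_abs_sub_le_and_eVariationOn_le (hη0 0) hcd f
  obtain ⟨v, hv, -⟩ := exists_isTruncApprox_of_first hη hη0 hcd hu huV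
  exact ⟨v, hv⟩

lemma IsTruncApprox.tendsto_sub {v : ℕ → ℝ → ℝ} (hv : IsTruncApprox f η c d v)
    (hη : Tendsto η atTop (nhds 0)) {x y : ℝ} (hx : x ∈ Icc c d) (hy : y ∈ Icc c d) :
    Tendsto (fun k ↦ v k x - v k y) atTop (nhds 0) :=
  (tendsto_add_atTop_iff_nat 1).1 <|
    squeeze_zero_norm (fun k ↦ hv.abs_sub_le k x hx y hy) hη

lemma ofReal_abs_anchoredSum_le_truncVarSeries_of_approx (h : IsNullLevels η θ)
    {v q : ℕ → ℝ → ℝ} (hv : IsTruncApprox f η c d v)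
    (hq : IsTruncApprox g (fun k ↦ θ (k + 1)) c d q)
    (h0 : v 0 = v 1 ∨ ∀ x ∈ Icc c d, |g d - g x| ≤ θ 0)
    {n : ℕ} {s t : ℕ → ℝ} (hs : Monotone s) (ht : Monotone t)
    (hsmem : ∀ i ≤ n, s i ∈ Icc c d) (htmem : ∀ i ≤ n, t i ∈ Icc c d) (htn : t n = d) :
    ENNReal.ofReal |anchoredSum n (f ∘ s) (g ∘ t)| ≤ truncVarSeries f g η θ c d := by
  have hlim := tendsto_anchoredSum_zero (n := n) (v := fun k ↦ v k ∘ s) (q := fun k ↦ q k ∘ t)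
    (fun i hi ↦ hv.tendsto_sub h.tendsto_left (hsmem i hi) (hsmem 0 n.zero_le))
    (fun i hi ↦ hq.tendsto_sub ((tendsto_add_atTop_iff_nat 1).2 h.tendsto_right)
      (htmem n le_rfl) (htmem i hi))
  have htele := ofReal_abs_anchoredSum_le_tsum hlim
  simp only [hv.zero, hq.zero] at htele
  refine htele.trans (ENNReal.tsum_le_tsum fun k ↦ ?_)
  simp only [ofReal_two_pow_mul, mul_assoc]
  refine add_le_add ?_ ?_
  · have hk : v k = v (k + 1) ∨ ∀ x ∈ Icc c d, |q k d - q k x| ≤ θ k := by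
      cases k with
      | zero => simpa only [hq.zero] using h0
      | succ k => exact .inr fun x hx ↦ hq.abs_sub_le k d (right_mem_Icc.2 (hx.1.trans hx.2)) x hx
    rcases hk with hk | hk
    · simp [hk, anchoredSum]
    · refine (ofReal_abs_anchoredSum_le_of_right (v := v k - v (k + 1)) hs hsmem
        fun i hi ↦ ?_).trans (mul_le_mul_right (hv.eVariationOn_le k) _)
      simpa only [Function.comp_apply, htn] using hk _ (htmem i hi)
  · exact (ofReal_abs_anchoredSum_le_of_left (q := q k - q (k + 1)) ht htmem fun i hi ↦
      hv.abs_sub_le k _ (hsmem i hi) _ (hsmem 0 n.zero_le)).trans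
      (mul_le_mul_right (hq.eVariationOn_le k) _)

lemma ofReal_abs_anchoredSum_le_truncVarSeries (h : IsNullLevels η θ)
    (h0 : IsSmallCell f g (η 0) (θ 0) c d) {n : ℕ} {s t : ℕ → ℝ} (hs : Monotone s) (ht : Monotone t)
    (hsmem : ∀ i ≤ n, s i ∈ Icc c d) (htmem : ∀ i ≤ n, t i ∈ Icc c d) (htn : t n = d) :
    ENNReal.ofReal |anchoredSum n (f ∘ s) (g ∘ t)| ≤ truncVarSeries f g η θ c d := by
  have hcd : c ≤ d := (hsmem 0 n.zero_le).1.trans (hsmem 0 n.zero_le).2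
  obtain ⟨q, hq⟩ := exists_isTruncApprox h.antitone_right h.nonneg_right hcd g
  rcases h0 with hf | hg
  · obtain ⟨v, hv, hv1⟩ := exists_isTruncApprox_of_first (u := 0) h.antitone_left h.nonneg_left hcd
      (by simpa using hf) (by simp [eVariationOn])
    exact ofReal_abs_anchoredSum_le_truncVarSeries_of_approx h hv hq
      (.inl (by rw [hv.zero, hv1, sub_zero])) hs ht hsmem htmem htn
  · obtain ⟨v, hv⟩ := exists_isTruncApprox h.antitone_left h.nonneg_left hcd f
    exact ofReal_abs_anchoredSum_le_truncVarSeries_of_approx h hv hq (.inr hg) hs ht hsmem htmem htn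

end TruncVarSeries

section Sewing

/-- The largest `|anchoredSum|` along the increasing chains from `c` to `d`; it bounds the error of
`f c * (g d - g c)` as an approximation of the left sums of `∫_c^d f dg`. -/
noncomputable def anchoredSup (f g : ℝ → ℝ) (c d : ℝ) : ENNReal :=
  ⨆ (n : ℕ) (r : ℕ → ℝ) (_ : Monotone r) (_ : r 0 = c) (_ : r n = d),
    ENNReal.ofReal |anchoredSum n (f ∘ r) (g ∘ r)|

/-- `F` is an indefinite integral of `f dg` on `[a;b]` in the sense of the sewing lemma: its
increments are approximated by `f c * (g d - g c)` as well as left sums are. -/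
def IsSewnPrimitive (f g : ℝ → ℝ) (a b : ℝ) (F : ℝ → ℝ) : Prop :=
  ∀ c ∈ Icc a b, ∀ d ∈ Icc a b, c ≤ d →
    ENNReal.ofReal |F d - F c - f c * (g d - g c)| ≤ anchoredSup f g c d

variable {f g : ℝ → ℝ} {a b : ℝ}

lemma exists_monotone_finset_subset_range {α : Type*} [LinearOrder α] [Nonempty α]
    (s : Finset α) : ∃ r : ℕ → α, Monotone r ∧ ↑s ⊆ range r := by
  rcases s.eq_empty_or_nonempty with rfl | hs
  · exact ⟨fun _ ↦ Classical.arbitrary α, monotone_const, by simp⟩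
  obtain ⟨m, hm⟩ : ∃ m, s.card = m + 1 := Nat.exists_eq_add_one.2 hs.card_pos
  refine ⟨fun i ↦ s.orderEmbOfFin hm (Fin.clamp i m),
    (s.orderEmbOfFin hm).monotone.comp Fin.clamp_monotone, fun x hx ↦ ?_⟩
  rw [← s.range_orderEmbOfFin hm] at hx
  obtain ⟨i, rfl⟩ := hx
  exact ⟨i, congrArg _ (Fin.ext (min_eq_left i.is_le))⟩

lemma sum_mul_sub_eq_anchoredSum_add (n : ℕ) (x y : ℕ → ℝ) :
    ∑ i ∈ Finset.range n, x i * (y (i + 1) - y i) = anchoredSum n x y + x 0 * (y n - y 0) := by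
  rw [anchoredSum, ← Finset.sum_range_sub, Finset.mul_sum, ← Finset.sum_add_distrib]
  exact Finset.sum_congr rfl fun i _ ↦ by ring

lemma exists_isSewnPrimitive_on_finset (f g : ℝ → ℝ) (s : Finset ℝ) :
    ∃ F : ℝ → ℝ, ∀ c ∈ s, ∀ d ∈ s, c ≤ d →
      ENNReal.ofReal |F d - F c - f c * (g d - g c)| ≤ anchoredSup f g c d := by
  obtain ⟨r, hr, hrs⟩ := exists_monotone_finset_subset_range s
  choose! J hJ using fun x (hx : x ∈ s) ↦ hrs hx
  refine ⟨fun x ↦ ∑ i ∈ Finset.range (J x), f (r i) * (g (r (i + 1)) - g (r i)),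
    fun c hc d hd hcd ↦ ?_⟩
  obtain ⟨n, hn⟩ : ∃ n, J d = J c + n := by
    refine Nat.exists_eq_add_of_le (le_of_not_gt fun hlt ↦ ?_)
    have hdc : d ≤ c := hJ c hc ▸ hJ d hd ▸ hr hlt.le
    exact hlt.ne (congrArg J (hdc.antisymm hcd))
  set r' : ℕ → ℝ := fun i ↦ r (J c + i)
  have hr'0 : r' 0 = c := hJ c hc
  have hr'n : r' n = d := by simp only [r', ← hn, hJ d hd]
  have hincr : ∑ i ∈ Finset.range (J d), f (r i) * (g (r (i + 1)) - g (r i)) -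
      ∑ i ∈ Finset.range (J c), f (r i) * (g (r (i + 1)) - g (r i)) - f c * (g d - g c) =
      anchoredSum n (f ∘ r') (g ∘ r') := by
    rw [hn, Finset.sum_range_add, add_sub_cancel_left, sub_eq_iff_eq_add]
    exact (sum_mul_sub_eq_anchoredSum_add n (f ∘ r') (g ∘ r')).trans
      (by simp only [Function.comp_apply, hr'0, hr'n])
  exact hincr ▸ le_iSup₂_of_le n r' (le_iSup₂_of_le (hr.comp add_right_mono) hr'0 <|
    le_iSup_of_le hr'n le_rfl)

lemma exists_forall_mem_of_forall_finset {ι : Type*} {K : ι → Set ℝ} {R : ι → ι → Set ℝ}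
    (hK : ∀ i, IsCompact (K i)) (hR : ∀ i j, IsClosed (R i j))
    (h : ∀ s : Finset ι, ∃ F : ι → ℝ, (∀ i ∈ s, F i ∈ K i) ∧
      ∀ i ∈ s, ∀ j ∈ s, F j - F i ∈ R i j) :
    ∃ F : ι → ℝ, ∀ i j, F j - F i ∈ R i j := by
  classical
  choose F hFK hFR using h
  set U : Ultrafilter (Finset ι) := Ultrafilter.of atTop
  have hU i : ∀ᶠ s in (U : Filter (Finset ι)), i ∈ s :=
    Ultrafilter.of_le atTop <|
      (eventually_ge_atTop {i}).mono fun s (hs : {i} ⊆ s) ↦ Finset.singleton_subset_iff.1 hs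
  have hlim i : ∃ l, Tendsto (F · i) U (nhds l) := by
    obtain ⟨l, -, hl⟩ := (hK i).ultrafilter_le_nhds (U.map (F · i)) <|
      le_principal_iff.2 <| (hU i).mono fun s hs ↦ hFK s i hs
    exact ⟨l, hl⟩
  choose G hG using hlim
  exact ⟨G, fun i j ↦ (hR i j).mem_of_tendsto ((hG j).sub (hG i)) <|
    ((hU i).and (hU j)).mono fun s hs ↦ hFR s i hs.1 j hs.2⟩

lemma exists_isSewnPrimitive (hab : a ≤ b) {M : ENNReal} (hM : M ≠ ⊤)
    (h : ∀ c ∈ Icc a b, anchoredSup f g c b ≤ M) : ∃ F, IsSewnPrimitive f g a b F := by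
  classical
  obtain ⟨F, hF⟩ := exists_forall_mem_of_forall_finset (ι := Icc a b)
    (K := fun c ↦ Metric.closedBall (-(f c * (g b - g c))) M.toReal)
    (R := fun c d ↦ {z | c ≤ d → ENNReal.ofReal |z - f c * (g d - g c)| ≤ anchoredSup f g c d})
    (fun c ↦ isCompact_closedBall _ _)
    (fun c d ↦ isClosed_imp isOpen_const <|
      isClosed_le (ENNReal.continuous_ofReal.comp (by fun_prop)) continuous_const)
    fun s ↦ by
      obtain ⟨F, hF⟩ := exists_isSewnPrimitive_on_finset f g (insert b (s.image (↑)))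
      have mem c (hc : c ∈ s) : (c : ℝ) ∈ insert b (s.image (↑)) :=
        Finset.mem_insert_of_mem (Finset.mem_image_of_mem _ hc)
      refine ⟨fun c ↦ F c - F b, fun c hc ↦ ?_, fun c hc d hd hcd ↦ ?_⟩
      · have hcb := (hF c (mem c hc) b (Finset.mem_insert_self _ _) c.2.2).trans (h c c.2)
        rw [ENNReal.ofReal_le_iff_le_toReal hM, abs_sub_comm] at hcb
        rw [Metric.mem_closedBall, Real.dist_eq]
        convert hcb using 2
        ring
      · simpa using hF c (mem c hc) d (mem d hd) hcd
  refine ⟨IccExtend hab F, fun c hc d hd hcd ↦ ?_⟩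
  rw [IccExtend_of_mem _ _ hc, IccExtend_of_mem _ _ hd]
  exact hF ⟨c, hc⟩ ⟨d, hd⟩ hcd

end Sewing

section RSIntegral

variable {f g F : ℝ → ℝ} {η θ : ℕ → ℝ} {a b c d ξ : ℝ}

lemma anchoredSup_le_truncVarSeries (h : IsNullLevels η θ)
    (h0 : IsSmallCell f g (η 0) (θ 0) c d) :
    anchoredSup f g c d ≤ truncVarSeries f g η θ c d := by
  refine iSup₂_le fun n r ↦ iSup₂_le fun hr hr0 ↦ iSup_le fun hrn ↦ ?_
  have hmem i (hi : i ≤ n) : r i ∈ Icc c d := ⟨hr0 ▸ hr i.zero_le, hrn ▸ hr hi⟩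
  exact ofReal_abs_anchoredSum_le_truncVarSeries h h0 hr hr hmem hmem hrn

lemma ofReal_abs_mul_sub_le_truncVarSeries (h : IsNullLevels η θ)
    (h0 : IsSmallCell f g (η 0) (θ 0) c d) (hξ : ξ ∈ Icc c d) :
    ENNReal.ofReal |(f ξ - f c) * (g d - g c)| ≤ truncVarSeries f g η θ c d := by
  have hcd : c ≤ d := hξ.1.trans hξ.2
  set s : ℕ → ℝ := fun i ↦ if i = 0 then c else ξ
  set t : ℕ → ℝ := fun i ↦ if i ≤ 1 then c else d
  have hs : Monotone s := monotone_nat_of_le_succ fun i ↦ by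
    rcases i with _ | i <;> simp [s, hξ.1]
  have ht : Monotone t := fun i j hij ↦ by
    dsimp only [t]
    split_ifs <;> first | exact le_rfl | exact hcd | omega
  have hsum : anchoredSum 2 (f ∘ s) (g ∘ t) = (f ξ - f c) * (g d - g c) := by
    simp [anchoredSum, Finset.sum_range_succ, s, t]
  rw [← hsum]
  refine ofReal_abs_anchoredSum_le_truncVarSeries h h0 hs ht (fun i _ ↦ ?_) (fun i _ ↦ ?_) rfl
  · dsimp only [s]
    split_ifs
    exacts [left_mem_Icc.2 hcd, hξ]
  · dsimp only [t]
    split_ifs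
    exacts [left_mem_Icc.2 hcd, right_mem_Icc.2 hcd]

lemma IsSewnPrimitive.ofReal_abs_mul_sub_le (hF : IsSewnPrimitive f g a b F)
    (h : IsNullLevels η θ) (h0 : IsSmallCell f g (η 0) (θ 0) c d)
    (hc : c ∈ Icc a b) (hd : d ∈ Icc a b) (hξ : ξ ∈ Icc c d) :
    ENNReal.ofReal |f ξ * (g d - g c) - (F d - F c)| ≤ 2 * truncVarSeries f g η θ c d := by
  have hsplit : f ξ * (g d - g c) - (F d - F c) =
      (f ξ - f c) * (g d - g c) - (F d - F c - f c * (g d - g c)) := by ring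
  calc
    _ ≤ ENNReal.ofReal |(f ξ - f c) * (g d - g c)| +
        ENNReal.ofReal |F d - F c - f c * (g d - g c)| := by
      rw [hsplit]
      exact (ENNReal.ofReal_le_ofReal (abs_sub _ _)).trans ENNReal.ofReal_add_le
    _ ≤ 2 * truncVarSeries f g η θ c d := by
      rw [two_mul]
      exact add_le_add (ofReal_abs_mul_sub_le_truncVarSeries h h0 hξ)
        ((hF c hc d hd (hξ.1.trans hξ.2)).trans (anchoredSup_le_truncVarSeries h h0))

lemma sum_fin_le_of_superadditive {α : Type*} [Preorder α] {ω : α → α → ENNReal}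
    (h : ∀ x y z, x ≤ y → y ≤ z → ω x y + ω y z ≤ ω x z) {n : ℕ} {t : Fin (n + 1) → α}
    (ht : Monotone t) :
    ∑ i : Fin n, ω (t i.castSucc) (t i.succ) ≤ ω (t 0) (t (Fin.last n)) := by
  induction n with
  | zero => simp
  | succ n ih =>
    rw [Fin.sum_univ_succ]
    exact (add_le_add le_rfl (ih (ht.comp Fin.strictMono_succ.monotone))).trans <|
      h _ _ _ (ht (Fin.zero_le _)) (ht (Fin.le_last _))

lemma exists_mem_abs_sub_le_of_tendsto {α : Type*} {l : Filter α} {u : α → ℝ} {L ε : ℝ}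
    (hu : Tendsto u l (nhds L)) (hε : 0 < ε) : ∃ U ∈ l, ∀ y ∈ U, ∀ z ∈ U, |u y - u z| ≤ ε := by
  refine ⟨u ⁻¹' Metric.ball L (ε / 2), hu (Metric.ball_mem_nhds _ (half_pos hε)),
    fun y hy z hz ↦ ?_⟩
  rw [← Real.dist_eq]
  exact (dist_triangle_right _ _ L).trans (add_halves ε ▸ (add_lt_add hy hz).le)

lemma NoCommonDiscont.exists_forall_isSmallCell (hfg : NoCommonDiscont f g a b) {ε₁ ε₂ : ℝ}
    (h₁ : 0 < ε₁) (h₂ : 0 < ε₂) :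
    ∃ δ > 0, ∀ c d, Icc c d ⊆ Icc a b → d - c < δ → IsSmallCell f g ε₁ ε₂ c d := by
  have hloc x (hx : x ∈ Icc a b) : ∃ U ∈ nhdsWithin x (Icc a b),
      (∀ y ∈ U, ∀ z ∈ U, |f y - f z| ≤ ε₁) ∨ ∀ y ∈ U, ∀ z ∈ U, |g y - g z| ≤ ε₂ := by
    rcases hfg x hx with hf | hg
    · obtain ⟨U, hU, hosc⟩ := exists_mem_abs_sub_le_of_tendsto hf h₁
      exact ⟨U, hU, .inl hosc⟩
    · obtain ⟨U, hU, hosc⟩ := exists_mem_abs_sub_le_of_tendsto hg h₂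
      exact ⟨U, hU, .inr hosc⟩
  choose! U hU hosc using hloc
  obtain ⟨δ, hδ, hball⟩ :=
    Metric.uniformity_basis_dist.lebesgue_number_lemma_nhdsWithin' isCompact_Icc hU
  refine ⟨δ, hδ, fun c d hsub hlt ↦ ?_⟩
  rcases lt_or_ge d c with hdc | hcd
  · simp [IsSmallCell, Icc_eq_empty hdc.not_ge]
  obtain ⟨y, hy⟩ := hball c (hsub (left_mem_Icc.2 hcd))
  have hcdU : Icc c d ⊆ U y := fun x hx ↦ hy ⟨by
    simp only [UniformSpace.ball, mem_preimage, mem_ofPred_eq, Real.dist_eq, abs_sub_lt_iff]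
    constructor <;> linarith [hx.1, hx.2], hsub hx⟩
  exact (hosc y y.2).imp (fun h x hx z hz ↦ h x (hcdU hx) z (hcdU hz))
    fun h x hx ↦ h d (hcdU (right_mem_Icc.2 hcd)) x (hcdU hx)

lemma exists_truncVarSeries_comp_add_lt (hfin : truncVarSeries f g η θ a b ≠ ⊤) {ε : ENNReal}
    (hε : 0 < ε) :
    ∃ K, truncVarSeries f g (fun k ↦ η (k + K)) (fun k ↦ θ (k + K)) a b < ε := by
  obtain ⟨K, hK⟩ := ((ENNReal.tendsto_sum_nat_add _ hfin).eventually_lt_const hε).exists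
  refine ⟨K, (ENNReal.tsum_le_tsum fun k ↦ ?_).trans_lt hK⟩
  have hpow : (2 : ENNReal) ^ k ≤ 2 ^ (k + K) := pow_le_pow_right₀ one_le_two (k.le_add_right K)
  simp only [ofReal_two_pow_mul, add_right_comm k 1 K]
  gcongr

lemma IsSewnPrimitive.ofReal_abs_sum_sub_le (hF : IsSewnPrimitive f g a b F)
    (h : IsNullLevels η θ) {n : ℕ} {t : Fin (n + 1) → ℝ} {ξ : Fin n → ℝ} (ht : Monotone t)
    (ht0 : t 0 = a) (htn : t (Fin.last n) = b)
    (hξ : ∀ i : Fin n, ξ i ∈ Icc (t i.castSucc) (t i.succ))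
    (h0 : ∀ i : Fin n, IsSmallCell f g (η 0) (θ 0) (t i.castSucc) (t i.succ)) :
    ENNReal.ofReal |∑ i : Fin n, f (ξ i) * (g (t i.succ) - g (t i.castSucc)) - (F b - F a)| ≤
      2 * truncVarSeries f g η θ a b := by
  have hmem i : t i ∈ Icc a b := ⟨ht0 ▸ ht (Fin.zero_le i), htn ▸ ht (Fin.le_last i)⟩
  have htele : ∑ i : Fin n, (F (t i.succ) - F (t i.castSucc)) = F b - F a := by
    rw [sum_fin_succ_sub_castSucc fun i ↦ F (t i), ht0, htn]
  rw [← htele, ← Finset.sum_sub_distrib]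
  calc
    _ ≤ ∑ i : Fin n, ENNReal.ofReal |f (ξ i) * (g (t i.succ) - g (t i.castSucc)) -
        (F (t i.succ) - F (t i.castSucc))| := by
      rw [← ENNReal.ofReal_sum_of_nonneg fun _ _ ↦ abs_nonneg _]
      exact ENNReal.ofReal_le_ofReal (Finset.abs_sum_le_sum_abs _ _)
    _ ≤ ∑ i : Fin n, 2 * truncVarSeries f g η θ (t i.castSucc) (t i.succ) :=
      Finset.sum_le_sum fun i _ ↦ hF.ofReal_abs_mul_sub_le h (h0 i) (hmem _) (hmem _) (hξ i)
    _ ≤ 2 * truncVarSeries f g η θ (t 0) (t (Fin.last n)) := by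
      rw [← Finset.mul_sum]
      gcongr
      exact sum_fin_le_of_superadditive (ω := truncVarSeries f g η θ)
        (fun _ _ _ hxy hyz ↦ truncVarSeries_add_le h hxy hyz) ht
    _ = 2 * truncVarSeries f g η θ a b := by rw [ht0, htn]

lemma IsSewnPrimitive.rsIntegral (hF : IsSewnPrimitive f g a b F) (hfg : NoCommonDiscont f g a b)
    (h : IsNullLevels η θ) (hη : ∀ k, 0 < η k) (hθ : ∀ k, 0 < θ k)
    (hfin : truncVarSeries f g η θ a b ≠ ⊤) : RSIntegral f g a b (F b - F a) := by
  intro ε hε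
  obtain ⟨K, hK⟩ := exists_truncVarSeries_comp_add_lt hfin (ε := ENNReal.ofReal ε / 2)
    (by simpa using hε)
  obtain ⟨δ, hδ, hosc⟩ := hfg.exists_forall_isSmallCell (hη (0 + K)) (hθ (0 + K))
  refine ⟨δ, hδ, fun n t ξ ht ht0 htn hξ hmesh ↦ ?_⟩
  rw [← ENNReal.ofReal_lt_ofReal_iff hε]
  refine (hF.ofReal_abs_sum_sub_le (h.comp_add K) ht.monotone ht0 htn hξ fun i ↦ ?_).trans_lt
    (ENNReal.mul_lt_of_lt_div' hK)
  have hsub : Icc (t i.castSucc) (t i.succ) ⊆ Icc a b :=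
    Icc_subset_Icc (ht0 ▸ ht.monotone (Fin.zero_le _)) (htn ▸ ht.monotone (Fin.le_last _))
  exact hosc _ _ hsub (hmesh i)

end RSIntegral

section Regulated

variable {f : ℝ → ℝ} {a b x δ : ℝ}

lemma Regulated.exists_tendsto_left (hf : Regulated f a b) (hx : x ∈ Icc a b) :
    ∃ L, Tendsto f (nhdsWithin x (Icc a b ∩ Iio x)) (nhds L) := by
  rcases hx.1.eq_or_lt with rfl | hax
  · have hempty : Icc a b ∩ Iio a = ∅ :=
      eq_empty_of_forall_notMem fun y hy ↦ hy.1.1.not_gt hy.2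
    exact ⟨0, by simp [hempty]⟩
  obtain ⟨L, hL⟩ : ∃ L, Tendsto f (nhdsWithin x (Iio x)) (nhds L) := by
    rcases hx.2.eq_or_lt with rfl | hxb
    exacts [hf.2.1, (hf.2.2 x ⟨hax, hxb⟩).1]
  exact ⟨L, hL.mono_left (nhdsWithin_mono x inter_subset_right)⟩

lemma Regulated.exists_tendsto_right (hf : Regulated f a b) (hx : x ∈ Icc a b) :
    ∃ L, Tendsto f (nhdsWithin x (Icc a b ∩ Ioi x)) (nhds L) := by
  rcases hx.2.eq_or_lt with rfl | hxb
  · have hempty : Icc a x ∩ Ioi x = ∅ :=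
      eq_empty_of_forall_notMem fun y hy ↦ hy.1.2.not_gt hy.2
    exact ⟨0, by simp [hempty]⟩
  obtain ⟨L, hL⟩ : ∃ L, Tendsto f (nhdsWithin x (Ioi x)) (nhds L) := by
    rcases hx.1.eq_or_lt with rfl | hax
    exacts [hf.1, (hf.2.2 x ⟨hax, hxb⟩).2]
  exact ⟨L, hL.mono_left (nhdsWithin_mono x inter_subset_right)⟩

lemma Regulated.exists_abs_sub_le_nhds (hf : Regulated f a b) (hδ : 0 < δ) (hx : x ∈ Icc a b) :
    ∃ κ > 0,
      (∀ s ∈ Icc a b ∩ Ioo (x - κ) x, ∀ t ∈ Icc a b ∩ Ioo (x - κ) x, |f t - f s| ≤ δ) ∧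
      ∀ s ∈ Icc a b ∩ Ioo x (x + κ), ∀ t ∈ Icc a b ∩ Ioo x (x + κ), |f t - f s| ≤ δ := by
  obtain ⟨L, hL⟩ := hf.exists_tendsto_left hx
  obtain ⟨R, hR⟩ := hf.exists_tendsto_right hx
  obtain ⟨U, hU, hUδ⟩ := exists_mem_abs_sub_le_of_tendsto hL hδ
  obtain ⟨V, hV, hVδ⟩ := exists_mem_abs_sub_le_of_tendsto hR hδ
  obtain ⟨κ₁, hκ₁, hU⟩ := Metric.mem_nhdsWithin_iff.1 hU
  obtain ⟨κ₂, hκ₂, hV⟩ := Metric.mem_nhdsWithin_iff.1 hV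
  rw [Real.ball_eq_Ioo] at hU hV
  have h₁ := min_le_left κ₁ κ₂
  have h₂ := min_le_right κ₁ κ₂
  have memU s (hs : s ∈ Icc a b ∩ Ioo (x - min κ₁ κ₂) x) : s ∈ U :=
    hU ⟨⟨by linarith [hs.2.1], by linarith [hs.2.2]⟩, hs.1, hs.2.2⟩
  have memV s (hs : s ∈ Icc a b ∩ Ioo x (x + min κ₁ κ₂)) : s ∈ V :=
    hV ⟨⟨by linarith [hs.2.1], by linarith [hs.2.2]⟩, hs.1, hs.2.1⟩
  exact ⟨min κ₁ κ₂, lt_min hκ₁ hκ₂, fun s hs t ht ↦ hUδ t (memU t ht) s (memU s hs),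
    fun s hs t ht ↦ hVδ t (memV t ht) s (memV s hs)⟩

lemma Regulated.isBounded_image (hf : Regulated f a b) : Bornology.IsBounded (f '' Icc a b) := by
  refine isCompact_Icc.induction_on (by simp) (fun S S' hSS' h ↦ h.subset (image_mono hSS'))
    (fun S S' h h' ↦ image_union f S S' ▸ h.union h') fun x hx ↦ ?_
  obtain ⟨L, hL⟩ := hf.exists_tendsto_left hx
  obtain ⟨R, hR⟩ := hf.exists_tendsto_right hx
  obtain ⟨U, hU, hUb⟩ := Metric.exists_isBounded_image_of_tendsto hL
  obtain ⟨V, hV, hVb⟩ := Metric.exists_isBounded_image_of_tendsto hR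
  refine ⟨insert x (U ∪ V), ?_, ?_⟩
  · have hsub : Icc a b ⊆ insert x (Icc a b ∩ Iio x ∪ Icc a b ∩ Ioi x) := fun y hy ↦ by
      rcases lt_trichotomy y x with h | h | h <;> simp [h, hy.1, hy.2]
    refine nhdsWithin_mono x hsub ?_
    rw [nhdsWithin_insert, nhdsWithin_union]
    exact union_mem_sup (mem_pure.2 rfl) (union_mem_sup hU hV)
  · rw [image_insert_eq, image_union]
    exact (hUb.union hVb).insert _

lemma Regulated.exists_abs_sub_le (hf : Regulated f a b) :
    ∃ M, ∀ s ∈ Icc a b, ∀ t ∈ Icc a b, |f t - f s| ≤ M := by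
  obtain ⟨M, hM⟩ := Metric.isBounded_iff.1 hf.isBounded_image
  exact ⟨M, fun s hs t ht ↦ hM (mem_image_of_mem f ht) (mem_image_of_mem f hs)⟩

lemma exists_monotone_le_sub {M : ℝ} (hM : 0 ≤ M) (x : ℝ) :
    ∃ J : ℝ → ℝ, Monotone J ∧ ∀ s t, s < t → s ≤ x → x ≤ t → M ≤ J t - J s := by
  refine ⟨fun t ↦ (if x ≤ t then M else 0) + if x < t then M else 0, ?_, ?_⟩
  · intro s t hst
    dsimp only
    gcongr <;> split_ifs <;> linarith
  · intro s t hst hsx hxt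
    simp only [if_pos hxt, if_neg hsx.not_gt]
    split_ifs <;> linarith

lemma Regulated.exists_monotone_nhds (hf : Regulated f a b) (hδ : 0 < δ) (hx : x ∈ Icc a b) :
    ∃ S ∈ nhdsWithin x (Icc a b), ∃ T : ℝ → ℝ, Monotone T ∧
      ∀ s ∈ S, ∀ t ∈ Icc a b, s ≤ t → |f t - f s| ≤ T t - T s + δ := by
  obtain ⟨M, hM⟩ := hf.exists_abs_sub_le
  have hM0 : 0 ≤ M := (abs_nonneg _).trans (hM x hx x hx)
  obtain ⟨κ, hκ, hl, hr⟩ := hf.exists_abs_sub_le_nhds hδ hx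
  obtain ⟨J, hJ, hJM⟩ := exists_monotone_le_sub hM0 x
  obtain ⟨J', hJ', hJM'⟩ := exists_monotone_le_sub hM0 (x + κ)
  refine ⟨Icc a b ∩ Ioo (x - κ) (x + κ), inter_mem_nhdsWithin _ (Ioo_mem_nhds (by linarith)
    (by linarith)), J + J', hJ.add hJ', ?_⟩
  rintro s ⟨hs, hxs, hsx⟩ t ht hst
  rcases hst.eq_or_lt with rfl | hlt
  · simpa using hδ.le
  have hts := hM s hs t ht
  have hJst := hJ hst
  have hJst' := hJ' hst
  simp only [Pi.add_apply]
  rcases lt_or_ge t x with htx | hxt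
  · linarith [hl s ⟨hs, hxs, hlt.trans htx⟩ t ⟨ht, hxs.trans hlt, htx⟩]
  rcases le_or_gt s x with hsx' | hxs'
  · linarith [hJM s t hlt hsx' hxt]
  rcases lt_or_ge t (x + κ) with htx' | hxt'
  · linarith [hr s ⟨hs, hxs', hsx⟩ t ⟨ht, hxs'.trans hlt, htx'⟩]
  · linarith [hJM' s t hlt hsx.le hxt']

lemma Regulated.truncVar_ne_top (hf : Regulated f a b) (hδ : 0 < δ) : truncVar f δ a b ≠ ⊤ := by
  obtain ⟨T, hT, h⟩ : ∃ T : ℝ → ℝ, Monotone T ∧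
      ∀ s ∈ Icc a b, ∀ t ∈ Icc a b, s ≤ t → |f t - f s| ≤ T t - T s + δ := by
    refine isCompact_Icc.induction_on (p := fun S ↦ ∃ T : ℝ → ℝ, Monotone T ∧
      ∀ s ∈ S, ∀ t ∈ Icc a b, s ≤ t → |f t - f s| ≤ T t - T s + δ)
      ⟨0, monotone_const, by simp⟩ ?_ ?_
      fun x hx ↦ hf.exists_monotone_nhds hδ hx
    · rintro S S' hSS' ⟨T, hT, h⟩
      exact ⟨T, hT, fun s hs ↦ h s (hSS' hs)⟩
    · rintro S S' ⟨T, hT, h⟩ ⟨T', hT', h'⟩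
      refine ⟨T + T', hT.add hT', ?_⟩
      rintro s (hs | hs) t ht hst
      · linarith [h s hs t ht hst, hT' hst, Pi.add_apply T T' s, Pi.add_apply T T' t]
      · linarith [h' s hs t ht hst, hT hst, Pi.add_apply T T' s, Pi.add_apply T T' t]
  exact ((truncVar_le_of_abs_sub_le (hT.monotoneOn _) h).trans_lt ENNReal.ofReal_lt_top).ne

end Regulated

section PositiveLevels

variable {f g : ℝ → ℝ} {η θ : ℕ → ℝ} {a b : ℝ}

lemma exists_pos_antitone_tsum_mul_ne_top {Y : ℕ → ENNReal} (hY : Monotone Y)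
    (hfin : ∀ k, Y k ≠ ⊤) :
    ∃ ρ : ℕ → ℝ, (∀ k, 0 < ρ k) ∧ Antitone ρ ∧ Tendsto ρ atTop (nhds 0) ∧
      ∑' k, ENNReal.ofReal (2 ^ k * ρ k) * Y k ≠ ⊤ := by
  set ρ : ℕ → ℝ := fun k ↦ (1 / 4) ^ k / (1 + (Y k).toReal)
  have hden k : 1 ≤ 1 + (Y k).toReal := le_add_of_nonneg_right ENNReal.toReal_nonneg
  have hρ k : 0 < ρ k := div_pos (by positivity) (by positivity)
  have hgeom : Tendsto (fun k : ℕ ↦ (1 / 4 : ℝ) ^ k) atTop (nhds 0) :=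
    tendsto_pow_atTop_nhds_zero_of_lt_one (by norm_num) (by norm_num)
  refine ⟨ρ, hρ, fun k l hkl ↦ ?_, squeeze_zero (fun k ↦ (hρ k).le)
    (fun k ↦ div_le_self (by positivity) (hden k)) hgeom,
    ne_top_of_le_ne_top summable_geometric_two.tsum_ofReal_ne_top
      (ENNReal.tsum_le_tsum fun k ↦ ?_)⟩
  · have hYkl : (Y k).toReal ≤ (Y l).toReal := ENNReal.toReal_mono (hfin l) (hY hkl)
    have hpow : (1 / 4 : ℝ) ^ l ≤ (1 / 4) ^ k :=
      pow_le_pow_of_le_one (by norm_num) (by norm_num) hkl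
    dsimp only [ρ]
    gcongr
  · have hmul : 2 ^ k * ρ k * (Y k).toReal = (1 / 2) ^ k * ((Y k).toReal / (1 + (Y k).toReal)) := by
      rw [show (1 / 2 : ℝ) = 2 * (1 / 4) by norm_num, mul_pow]
      ring
    rw [← ENNReal.ofReal_toReal (hfin k), ← ENNReal.ofReal_mul' ENNReal.toReal_nonneg, hmul]
    gcongr
    exact mul_le_of_le_one_right (by positivity) ((div_le_one (by positivity)).2 (by linarith))

lemma exists_pos_isNullLevels_of_left (hg : Regulated g a b) (hV : truncVar f 0 a b ≠ ⊤) :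
    ∃ η θ, IsNullLevels η θ ∧ (∀ k, 0 < η k) ∧ (∀ k, 0 < θ k) ∧
      truncVarSeries f g η θ a b ≠ ⊤ := by
  obtain ⟨θ, hθ, hθa, hθlim, hθV⟩ :=
    exists_pos_antitone_tsum_mul_ne_top monotone_const fun _ ↦ hV
  have hθa' : Antitone fun k ↦ θ (k + 1) := hθa.comp_monotone add_left_mono
  obtain ⟨η, hη, hηa, hηlim, hηY⟩ := exists_pos_antitone_tsum_mul_ne_top
    ((truncVar_anti g a b).comp hθa') fun k ↦ hg.truncVar_ne_top (hθ (k + 1))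
  refine ⟨η, θ, ⟨hηa, hθa', hηlim, hθlim⟩, hη, hθ, ?_⟩
  rw [truncVarSeries, ENNReal.tsum_add]
  refine ENNReal.add_ne_top.2 ⟨ne_top_of_le_ne_top hθV (ENNReal.tsum_le_tsum fun k ↦ ?_), hηY⟩
  gcongr
  exact truncVar_anti f a b (hη k).le

lemma exists_pos_isNullLevels_of_right (hf : Regulated f a b) (hV : truncVar g 0 a b ≠ ⊤) :
    ∃ η θ, IsNullLevels η θ ∧ (∀ k, 0 < η k) ∧ (∀ k, 0 < θ k) ∧
      truncVarSeries f g η θ a b ≠ ⊤ := by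
  obtain ⟨η, hη, hηa, hηlim, hηV⟩ :=
    exists_pos_antitone_tsum_mul_ne_top monotone_const fun _ ↦ hV
  obtain ⟨θ, hθ, hθa, hθlim, hθX⟩ := exists_pos_antitone_tsum_mul_ne_top
    ((truncVar_anti f a b).comp hηa) fun k ↦ hf.truncVar_ne_top (hη k)
  refine ⟨η, θ, ⟨hηa, hθa.comp_monotone add_left_mono, hηlim, hθlim⟩, hη, hθ, ?_⟩
  rw [truncVarSeries, ENNReal.tsum_add]
  refine ENNReal.add_ne_top.2 ⟨hθX, ne_top_of_le_ne_top hηV (ENNReal.tsum_le_tsum fun k ↦ ?_)⟩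
  gcongr
  exact truncVar_anti g a b (hθ (k + 1)).le

lemma IsNullLevels.pos (h : IsNullLevels η θ) (hθ0 : 0 < θ 0) (hf : truncVar f 0 a b = ⊤)
    (hg : truncVar g 0 a b = ⊤) (hfin : truncVarSeries f g η θ a b ≠ ⊤) :
    ∀ k, 0 < η k ∧ 0 < θ k := by
  have hterm k := ENNReal.add_ne_top.1 (ENNReal.ne_top_of_tsum_ne_top hfin k)
  have left k (hθ : 0 < θ k) : 0 < η k := (h.nonneg_left k).lt_of_ne fun hη ↦
    (hterm k).1 (by rw [← hη, hf, ENNReal.mul_top]; positivity)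
  have right k (hη : 0 < η k) : 0 < θ (k + 1) := (h.nonneg_right k).lt_of_ne fun hθ ↦
    (hterm k).2 (by rw [← hθ, hg, ENNReal.mul_top]; positivity)
  intro k
  induction k with
  | zero => exact ⟨left 0 hθ0, hθ0⟩
  | succ k ih => exact ⟨left _ (right k ih.1), right k ih.1⟩

lemma IsNullLevels.exists_pos (h : IsNullLevels η θ) (hf : Regulated f a b) (hg : Regulated g a b)
    (h0 : ∀ x ∈ Icc a b, |g b - g x| ≤ θ 0) (hfin : truncVarSeries f g η θ a b ≠ ⊤) :
    ∃ η' θ', IsNullLevels η' θ' ∧ (∀ k, 0 < η' k) ∧ (∀ k, 0 < θ' k) ∧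
      truncVarSeries f g η' θ' a b ≠ ⊤ := by
  by_cases hVf : truncVar f 0 a b = ⊤
  case neg => exact exists_pos_isNullLevels_of_left hg hVf
  by_cases hVg : truncVar g 0 a b = ⊤
  case neg => exact exists_pos_isNullLevels_of_right hf hVg
  have hθ0 : 0 < θ 0 := by
    by_contra! hθ0
    have hconst x (hx : x ∈ Icc a b) : g x = g b :=
      (sub_eq_zero.1 (abs_nonpos_iff.1 ((h0 x hx).trans hθ0))).symm
    refine (truncVar_le_of_abs_sub_le (T := 0) (f := g) (δ := 0) monotoneOn_const
      fun s hs t ht _ ↦ ?_).not_gt (hVg ▸ ENNReal.ofReal_lt_top)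
    simp [hconst s hs, hconst t ht]
  have hpos := h.pos hθ0 hVf hVg hfin
  exact ⟨η, θ, h, fun k ↦ (hpos k).1, fun k ↦ (hpos k).2, hfin⟩

end PositiveLevels

lemma Regulated.abs_sub_le_sSup {g : ℝ → ℝ} {a b : ℝ} (hg : Regulated g a b) :
    ∀ x ∈ Icc a b, |g b - g x| ≤ sSup {x | ∃ t ∈ Icc a b, x = |g b - g t|} := by
  intro x hx
  obtain ⟨M, hM⟩ := hg.exists_abs_sub_le
  refine le_csSup ⟨M, ?_⟩ ⟨x, hx, rfl⟩
  rintro _ ⟨t, ht, rfl⟩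
  exact hM t ht b (right_mem_Icc.2 (ht.1.trans ht.2))

lemma exists_rsIntegral_and_ofReal_abs_sub_le_truncVarSeries {f g : ℝ → ℝ} {η θ : ℕ → ℝ}
    {a b : ℝ} (hab : a ≤ b) (hf : Regulated f a b) (hg : Regulated g a b)
    (hfg : NoCommonDiscont f g a b) (h : IsNullLevels η θ)
    (h0 : ∀ x ∈ Icc a b, |g b - g x| ≤ θ 0) (hfin : truncVarSeries f g η θ a b ≠ ⊤) :
    ∃ I : ℝ, RSIntegral f g a b I ∧
      ENNReal.ofReal |I - f a * (g b - g a)| ≤ truncVarSeries f g η θ a b := by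
  have hsup c (hc : c ∈ Icc a b) : anchoredSup f g c b ≤ truncVarSeries f g η θ a b :=
    (anchoredSup_le_truncVarSeries h (.inr fun x hx ↦ h0 x ⟨hc.1.trans hx.1, hx.2⟩)).trans
      (truncVarSeries_mono h hc.1 hc.2 le_rfl)
  have ha : a ∈ Icc a b := left_mem_Icc.2 hab
  obtain ⟨F, hF⟩ := exists_isSewnPrimitive hab hfin hsup
  obtain ⟨η', θ', h', hη', hθ', hfin'⟩ := h.exists_pos hf hg h0 hfin
  exact ⟨F b - F a, hF.rsIntegral hfg h' hη' hθ' hfin',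
    (hF a ha b (right_mem_Icc.2 hab) hab).trans (hsup a ha)⟩

/-- Theorem 2 (symmetric version of the main theorem): existence of the
Riemann–Stieltjes integral and the estimate `≤ S̃`. -/
theorem rs_integral_exists_of_truncVar_sum_lt_top'
    (a b : ℝ) (hab : a < b) (f g : ℝ → ℝ)
    (hf : Regulated f a b) (hg : Regulated g a b)
    (hfg : NoCommonDiscont f g a b)
    (η θ : ℕ → ℝ) (hηnn : ∀ k, 0 ≤ η k) (hθnn : ∀ k, 0 ≤ θ k)
    (hηa : Antitone η) (hθa : Antitone θ)
    (hηlim : Tendsto η atTop (nhds 0)) (hθlim : Tendsto θ atTop (nhds 0))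
    (θm1 : ℝ) (hθm1 : θm1 = sSup {x | ∃ t ∈ Set.Icc a b, x = |g b - g t|})
    (S' : ENNReal)
    (hS' : S' = (∑' k : ℕ,
          ENNReal.ofReal ((2 : ℝ) ^ k * (if k = 0 then θm1 else θ (k - 1))) *
            truncVar f (η k) a b)
        + ∑' k : ℕ, ENNReal.ofReal ((2 : ℝ) ^ k * η k) * truncVar g (θ k) a b)
    (hS'fin : S' < ⊤) :
    ∃ I : ℝ, RSIntegral f g a b I ∧
      ENNReal.ofReal |I - f a * (g b - g a)| ≤ S' := by
  set θ' : ℕ → ℝ := fun k ↦ if k = 0 then θm1 else θ (k - 1)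
  have hlevels : IsNullLevels η θ' :=
    ⟨hηa, hθa, hηlim, (tendsto_add_atTop_iff_nat 1).1 hθlim⟩
  have hseries : S' = truncVarSeries f g η θ' a b := hS'.trans ENNReal.tsum_add.symm
  rw [hseries] at hS'fin ⊢
  exact exists_rsIntegral_and_ofReal_abs_sub_le_truncVarSeries hab.le hf hg hfg hlevels
    (fun x hx ↦ (hg.abs_sub_le_sSup x hx).trans_eq hθm1.symm) hS'fin.ne
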